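/- The function PA(q) extends analytically to the slit disc D₀ := { q ∈ ℂ : |q| < 55/100 and q ∉ [1/2, 55/100] }, and for every q ∈ D₀ it admits the convergent representation PA(q) = C(q) - A(q) · ((v(q);q)_∞/(q u(q);q)_∞) · [ q²/(1-q)² + ∑_{ν=1}^∞ d_ν(q) · q^{ν+2}/(1-2q+q^{ν+2}) ]. -/

import Mathlib

open Complex Filter Asymptotics Topology

noncomputable section

/-- finite q-Pochhammer symbol `(x;q)_n` -/
def qPF (x q : ℂ) (n : ℕ) : ℂ := ∏ i ∈ Finset.range n, (1 - x * q ^ i)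

/-- infinite q-Pochhammer symbol `(x;q)_∞` -/
def qPI (x q : ℂ) : ℂ := ∏' i : ℕ, (1 - x * q ^ i)

def uF (q : ℂ) : ℂ := q / (1 - q)
def vF (q : ℂ) : ℂ := (1 - q + q ^ 2) / (1 - q)
def aF (q : ℂ) : ℂ := q ^ 2 / (1 - q + q ^ 2)
def AF (q : ℂ) : ℂ := 2 * q * (1 - q) ^ 2 / (1 - 2 * q) ^ 2
def CF (q : ℂ) : ℂ := 2 * q * (3 - 10 * q + 9 * q ^ 2 - q ^ 3) / ((1 - q) * (1 - 2 * q) ^ 2)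
def DF (q : ℂ) : ℂ := CF q - (q ^ 2 / (1 - q) ^ 2) * AF q * qPI (vF q) q / qPI (aF q * vF q) q

/-- the `m`-th term (for `m ≥ 1`) of the explicit series for `PA(q)` -/
def PAterm (q : ℂ) (m : ℕ) : ℂ :=
  (-1) ^ m * q ^ (2 * m) / ((1 - 2 * q) ^ m * (1 - q - q ^ (m + 1))) *
    ∏ k ∈ Finset.Icc 1 (m - 1),
      ((1 - q - q ^ k + q ^ (k + 1) - q ^ (k + 2)) / (1 - q - q ^ (k + 1)))

/-- the explicit convergent series defining `PA(q)` for small `q` -/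
def PAseries (q : ℂ) : ℂ :=
  (-2 * q ^ 3 * (1 - q) ^ 2 / (1 - 2 * q) ^ 2) * (∑' m : ℕ, PAterm q (m + 1))
    + 2 * q * (3 - 10 * q + 9 * q ^ 2 - q ^ 3) / ((1 - 2 * q) ^ 2 * (1 - q))

/-- the function `z ↦ (q u(q) z; q)_∞ / (v(q) z; q)_∞` -/
def dFun (q : ℂ) : ℂ → ℂ := fun z => qPI (q * uF q * z) q / qPI (vF q * z) q

/-- `d_ν(q)`: the `ν`-th Taylor coefficient at `z = 0` of `dFun q` -/
def dCoef (q : ℂ) (ν : ℕ) : ℂ := iteratedDeriv ν (dFun q) 0 / (Nat.factorial ν)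

/-- the slit disc `D₀ = {q : |q| < 55/100, q ∉ [1/2, 55/100]}` -/
def slitDisc : Set ℂ :=
  {q : ℂ | ‖q‖ < 55 / 100 ∧ ¬∃ x : ℝ, 1 / 2 ≤ x ∧ x ≤ 55 / 100 ∧ q = (x : ℂ)}

/-!
The `q`-binomial theorem expands `(q u z; q)_∞ / (v z; q)_∞` into a power series with explicit
coefficients `d_n(q)`. The finite products in the `m`-th term of the series for `PA(q)` are
quotients of infinite ones, so up to a common factor that term is `t^m` times this function at
`z = q^m`, where `t = -q² / (1 - 2q)`. Expanding in powers of `z` and summing the geometric series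
over `m` first gives a Lambert-type sum over `n`, whose terms have poles only at the zeros of
`1 - 2q + q^(n+2)`. For `n = 0` this is `(1 - q)²`; for `n ≥ 1` the power is too small to cancel
`1 - 2q` on the slit disc, uniformly in `n` and locally uniformly in `q`. Hence the sum is analytic
on the slit disc, beyond the region `|t| < 1` where the original series converges.
-/

lemma norm_mul_pow_lt_one {𝕜 : Type*} [NormedField 𝕜] {x q : 𝕜} (hx : ‖x‖ < 1) (hq : ‖q‖ ≤ 1)
    (n : ℕ) : ‖x * q ^ n‖ < 1 := by
  rw [norm_mul, norm_pow]
  exact mul_lt_one_of_nonneg_of_lt_one_left (norm_nonneg x) hx (pow_le_one₀ (norm_nonneg q) hq)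

section QPochhammer

variable {x q : ℂ}

lemma summable_norm_neg_mul_pow (x : ℂ) (hq : ‖q‖ < 1) :
    Summable fun i : ℕ => ‖-(x * q ^ i)‖ := by
  simpa only [norm_neg, norm_mul, norm_pow] using
    (summable_geometric_of_lt_one (norm_nonneg q) hq).mul_left ‖x‖

lemma tendsto_qPF (x : ℂ) (hq : ‖q‖ < 1) :
    Tendsto (qPF x q) atTop (𝓝 (qPI x q)) := by
  have : Multipliable fun i : ℕ => 1 - x * q ^ i := by
    simpa only [sub_eq_add_neg] using
      multipliable_one_add_of_summable (summable_norm_neg_mul_pow x hq)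
  exact this.tendsto_prod_tprod_nat

lemma qPI_ne_zero (hq : ‖q‖ < 1) (hx : ‖x‖ < 1) : qPI x q ≠ 0 := by
  have hfactor (i : ℕ) : 1 + -(x * q ^ i) ≠ 0 := by
    simpa only [← sub_eq_add_neg] using
      (isUnit_one_sub_of_norm_lt_one (norm_mul_pow_lt_one hx hq.le i)).ne_zero
  simpa only [qPI, sub_eq_add_neg] using
    tprod_one_add_ne_zero_of_summable hfactor (summable_norm_neg_mul_pow x hq)

lemma qPF_succ (x q : ℂ) (n : ℕ) : qPF x q (n + 1) = qPF x q n * (1 - x * q ^ n) :=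
  Finset.prod_range_succ _ n

lemma qPF_add (x q : ℂ) (n m : ℕ) : qPF x q (n + m) = qPF x q n * qPF (x * q ^ n) q m := by
  simp only [qPF, Finset.prod_range_add, pow_add, mul_assoc]

lemma qPF_mul_qPI (x : ℂ) (hq : ‖q‖ < 1) (n : ℕ) :
    qPF x q n * qPI (x * q ^ n) q = qPI x q := by
  refine tendsto_nhds_unique ((tendsto_qPF _ hq).const_mul _) ?_
  simp only [← qPF_add, add_comm n]
  exact (tendsto_add_atTop_iff_nat n).2 (tendsto_qPF x hq)

lemma qPF_eq_qPI_div_qPI {n : ℕ} (hq : ‖q‖ < 1) (hx : qPI (x * q ^ n) q ≠ 0) :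
    qPF x q n = qPI x q / qPI (x * q ^ n) q :=
  eq_div_of_mul_eq hx (qPF_mul_qPI x hq n)

lemma analyticAt_qPI {x : ℂ → ℂ} (hx : AnalyticAt ℂ x q) (hq : ‖q‖ < 1) :
    AnalyticAt ℂ (fun p => qPI (x p) p) q := by
  obtain ⟨r, hqr, hr⟩ := exists_between hq
  have hnear : ∀ᶠ p in 𝓝 q, ‖p‖ < r ∧ ‖x p‖ < ‖x q‖ + 1 ∧ DifferentiableAt ℂ x p :=
    (continuous_norm.continuousAt.eventually_lt_const hqr).and
      ((hx.continuousAt.norm.eventually_lt_const (lt_add_one _)).and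
        (hx.eventually_analyticAt.mono fun _ h => h.differentiableAt))
  obtain ⟨U, hU, hUo, hqU⟩ := eventually_nhds_iff.1 hnear
  have hxU : DifferentiableOn ℂ x U := fun p hp => (hU p hp).2.2.differentiableWithinAt
  have hxU' : ContinuousOn x U := hxU.continuousOn
  have hmajorant : Summable fun n : ℕ => (‖x q‖ + 1) * r ^ n :=
    (summable_geometric_of_lt_one ((norm_nonneg q).trans hqr.le) hr).mul_left _
  have hprod := hmajorant.hasProdLocallyUniformlyOn_nat_one_add
    (f := fun n p => -(x p * p ^ n)) hUo
    (.of_forall fun n p hp => by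
      obtain ⟨hpr, hxp, -⟩ := hU p hp
      rw [norm_neg, norm_mul, norm_pow]
      gcongr)
    (fun n => by fun_prop)
  have hdiff := hprod.differentiableOn
    (.of_forall fun _ => by
      simpa only [Finset.prod_fn] using DifferentiableOn.finsetProd fun _ _ => by fun_prop) hUo
  simpa only [qPI, sub_eq_add_neg] using hdiff.analyticAt (hUo.mem_nhds hqU)

end QPochhammer

section QBinomial

/-- The `n`-th coefficient `∏_{i<n} (b - a q^i) / (1 - q^(i+1))` of the `q`-binomial series
`(a z; q)_∞ / (b z; q)_∞ = ∑ₙ cₙ zⁿ`. Homogenizing the usual `(a; q)_n / (q; q)_n` allows `b = 0`;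
the field is arbitrary because these coefficients are majorized by coefficients over `ℝ`. -/
def qBinomCoeff {𝕜 : Type*} [Field 𝕜] (a b q : 𝕜) (n : ℕ) : 𝕜 :=
  ∏ i ∈ Finset.range n, (b - a * q ^ i) / (1 - q ^ (i + 1))

@[simp]
lemma qBinomCoeff_zero {𝕜 : Type*} [Field 𝕜] (a b q : 𝕜) : qBinomCoeff a b q 0 = 1 :=
  Finset.prod_range_zero _

lemma qBinomCoeff_succ {𝕜 : Type*} [Field 𝕜] (a b q : 𝕜) (n : ℕ) :
    qBinomCoeff a b q (n + 1) =
      qBinomCoeff a b q n * ((b - a * q ^ n) / (1 - q ^ (n + 1))) :=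
  Finset.prod_range_succ _ n

section NormedField

variable {𝕜 : Type*} [NormedField 𝕜] {a b q z : 𝕜}

lemma one_sub_pow_succ_ne_zero (hq : ‖q‖ < 1) (n : ℕ) : 1 - q ^ (n + 1) ≠ 0 := by
  intro h
  have hpow : ‖q‖ ^ (n + 1) = 1 := by rw [← norm_pow, ← sub_eq_zero.1 h, norm_one]
  exact (pow_lt_one₀ (norm_nonneg q) hq n.succ_ne_zero).ne hpow

lemma summable_norm_qBinomCoeff_mul_pow (a : 𝕜) (hq : ‖q‖ < 1) (hbz : ‖b * z‖ < 1) :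
    Summable fun n => ‖qBinomCoeff a b q n * z ^ n‖ := by
  have hpow : Tendsto (fun n : ℕ => q ^ n) atTop (𝓝 0) :=
    tendsto_pow_atTop_nhds_zero_of_norm_lt_one hq
  have hratio : Tendsto (fun n : ℕ => ‖(b - a * q ^ n) / (1 - q ^ (n + 1)) * z‖) atTop
      (𝓝 ‖b * z‖) := by
    have hnum := (hpow.const_mul a).const_sub b
    have hden := ((tendsto_add_atTop_iff_nat 1).2 hpow).const_sub 1
    simpa using ((hnum.div hden (by simp)).mul_const z).norm
  obtain ⟨r, hbr, hr⟩ := exists_between hbz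
  refine summable_of_ratio_norm_eventually_le hr ?_
  filter_upwards [hratio.eventually_le_const hbr] with n hn
  calc ‖‖qBinomCoeff a b q (n + 1) * z ^ (n + 1)‖‖
      = ‖(b - a * q ^ n) / (1 - q ^ (n + 1)) * z‖ * ‖qBinomCoeff a b q n * z ^ n‖ := by
        rw [norm_norm, ← norm_mul, qBinomCoeff_succ, pow_succ]
        ring_nf
    _ ≤ r * ‖‖qBinomCoeff a b q n * z ^ n‖‖ := by
        rw [norm_norm]
        gcongr

lemma norm_qBinomCoeff_le {A B r : ℝ} (ha : ‖a‖ ≤ A) (hb : ‖b‖ ≤ B) (hq : ‖q‖ ≤ r)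
    (hr : r < 1) (n : ℕ) : ‖qBinomCoeff a b q n‖ ≤ qBinomCoeff (-A) B r n := by
  have hr₀ : 0 ≤ r := (norm_nonneg q).trans hq
  have hA : 0 ≤ A := (norm_nonneg a).trans ha
  rw [qBinomCoeff, qBinomCoeff, norm_prod]
  refine Finset.prod_le_prod (fun _ _ => norm_nonneg _) fun i _ => ?_
  have hnum : ‖b - a * q ^ i‖ ≤ B - -A * r ^ i := by
    calc ‖b - a * q ^ i‖ ≤ ‖b‖ + ‖a‖ * ‖q‖ ^ i := by
          simpa only [norm_mul, norm_pow] using norm_sub_le b (a * q ^ i)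
      _ ≤ B + A * r ^ i := by gcongr
      _ = B - -A * r ^ i := by ring
  have hden : 1 - r ^ (i + 1) ≤ ‖1 - q ^ (i + 1)‖ := by
    calc 1 - r ^ (i + 1) ≤ 1 - ‖q‖ ^ (i + 1) := by gcongr
      _ ≤ ‖1 - q ^ (i + 1)‖ := by
        simpa only [norm_one, norm_pow] using norm_sub_norm_le 1 (q ^ (i + 1))
  have hden_pos : 0 < 1 - r ^ (i + 1) := sub_pos.2 (pow_lt_one₀ hr₀ hr i.succ_ne_zero)
  rw [norm_div]
  exact div_le_div₀ ((norm_nonneg _).trans hnum) hnum hden_pos hden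

end NormedField

lemma analyticAt_qBinomCoeff {𝕜 : Type*} [NontriviallyNormedField 𝕜] {a b : 𝕜 → 𝕜} {q : 𝕜}
    (ha : AnalyticAt 𝕜 a q) (hb : AnalyticAt 𝕜 b q) (hq : ‖q‖ < 1) (n : ℕ) :
    AnalyticAt 𝕜 (fun p => qBinomCoeff (a p) (b p) p n) q :=
  Finset.analyticAt_fun_prod _ fun i _ =>
    AnalyticAt.fun_div (by fun_prop) (by fun_prop) (one_sub_pow_succ_ne_zero hq i)

section Series

variable {𝕜 : Type*} [NormedField 𝕜] [CompleteSpace 𝕜] {a b q z : 𝕜}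

/-- The `q`-binomial series `∑ₙ cₙ zⁿ` with `cₙ = qBinomCoeff a b q n`. -/
def qBinomSeries {𝕜 : Type*} [NormedField 𝕜] (a b q z : 𝕜) : 𝕜 :=
  ∑' n, qBinomCoeff a b q n * z ^ n

lemma qBinomSeries_functional_eq (a : 𝕜) (hq : ‖q‖ < 1) (hbz : ‖b * z‖ < 1) :
    (1 - b * z) * qBinomSeries a b q z = (1 - a * z) * qBinomSeries a b q (z * q) := by
  have hs := (summable_norm_qBinomCoeff_mul_pow a hq hbz).of_norm
  have hbzq : ‖b * (z * q)‖ < 1 := by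
    simpa only [mul_assoc, pow_one] using norm_mul_pow_lt_one hbz hq.le 1
  have hs' := (summable_norm_qBinomCoeff_mul_pow a hq hbzq).of_norm
  have hcoeff (n : ℕ) :
      qBinomCoeff a b q (n + 1) * z ^ (n + 1) - qBinomCoeff a b q (n + 1) * (z * q) ^ (n + 1) =
        b * z * (qBinomCoeff a b q n * z ^ n) - a * z * (qBinomCoeff a b q n * (z * q) ^ n) := by
    have := one_sub_pow_succ_ne_zero hq n
    rw [qBinomCoeff_succ, mul_pow, mul_pow]
    field_simp
    ring
  have hdiff : qBinomSeries a b q z - qBinomSeries a b q (z * q) =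
      b * z * qBinomSeries a b q z - a * z * qBinomSeries a b q (z * q) := by
    simp only [qBinomSeries]
    rw [← hs.tsum_sub hs', (hs.sub hs').tsum_eq_zero_add, ← tsum_mul_left, ← tsum_mul_left,
      ← (hs.mul_left _).tsum_sub (hs'.mul_left _)]
    simp only [hcoeff, qBinomCoeff_zero, pow_zero, sub_self, zero_add]
  linear_combination hdiff

lemma tendsto_qBinomSeries_mul_pow (a : 𝕜) (hq : ‖q‖ < 1) (hbz : ‖b * z‖ < 1) :
    Tendsto (fun n : ℕ => qBinomSeries a b q (z * q ^ n)) atTop (𝓝 1) := by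
  have hzero : ∑' k, qBinomCoeff a b q k * 0 ^ k = 1 := by
    rw [tsum_eq_single 0 fun k hk => by rw [zero_pow hk, mul_zero]]
    simp
  have harg : Tendsto (fun n : ℕ => z * q ^ n) atTop (𝓝 0) := by
    simpa using (tendsto_pow_atTop_nhds_zero_of_norm_lt_one hq).const_mul z
  rw [← hzero]
  refine tendsto_tsum_of_dominated_convergence (summable_norm_qBinomCoeff_mul_pow a hq hbz)
    (fun k => (harg.pow k).const_mul _) (.of_forall fun n k => ?_)
  rw [norm_mul, norm_mul, norm_pow, norm_pow, norm_mul, norm_pow]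
  gcongr
  exact mul_le_of_le_one_right (norm_nonneg z) (pow_le_one₀ (norm_nonneg q) hq.le)

end Series

variable {a b q z : ℂ}

lemma qPF_mul_qBinomSeries (a : ℂ) (hq : ‖q‖ < 1) (hbz : ‖b * z‖ < 1) (n : ℕ) :
    qPF (b * z) q n * qBinomSeries a b q z =
      qPF (a * z) q n * qBinomSeries a b q (z * q ^ n) := by
  induction n with
  | zero => simp [qPF]
  | succ n ih =>
    have hbzq : ‖b * (z * q ^ n)‖ < 1 := by
      simpa only [mul_assoc] using norm_mul_pow_lt_one hbz hq.le n
    have hfun := qBinomSeries_functional_eq a hq hbzq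
    rw [qPF_succ, qPF_succ, pow_succ, ← mul_assoc z]
    linear_combination (1 - b * z * q ^ n) * ih + qPF (a * z) q n * hfun

theorem qBinomSeries_eq_qPI_div_qPI (a : ℂ) (hq : ‖q‖ < 1) (hbz : ‖b * z‖ < 1) :
    qBinomSeries a b q z = qPI (a * z) q / qPI (b * z) q := by
  rw [eq_div_iff (qPI_ne_zero hq hbz), mul_comm]
  refine tendsto_nhds_unique ((tendsto_qPF (b * z) hq).mul_const _) ?_
  simpa only [qPF_mul_qBinomSeries a hq hbz, mul_one] using
    (tendsto_qPF (a * z) hq).mul (tendsto_qBinomSeries_mul_pow a hq hbz)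

theorem hasSum_qBinomCoeff_mul_pow (a : ℂ) (hq : ‖q‖ < 1) (hbz : ‖b * z‖ < 1) :
    HasSum (fun n => qBinomCoeff a b q n * z ^ n) (qPI (a * z) q / qPI (b * z) q) := by
  rw [← qBinomSeries_eq_qPI_div_qPI a hq hbz]
  exact (summable_norm_qBinomCoeff_mul_pow a hq hbz).of_norm.hasSum

lemma hasFPowerSeriesAt_qPI_div_qPI (a b : ℂ) (hq : ‖q‖ < 1) :
    HasFPowerSeriesAt (fun z => qPI (a * z) q / qPI (b * z) q)
      (.ofScalars ℂ (qBinomCoeff a b q)) 0 := by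
  rw [hasFPowerSeriesAt_iff]
  have hcont : ContinuousAt (fun z : ℂ => ‖b * z‖) 0 := by fun_prop
  filter_upwards [hcont.eventually_lt_const (u := 1) (by simp)] with z hz
  simpa only [FormalMultilinearSeries.coeff_ofScalars, smul_eq_mul, mul_comm, zero_add] using
    hasSum_qBinomCoeff_mul_pow a hq hz

lemma iteratedDeriv_qPI_div_qPI (a b : ℂ) (hq : ‖q‖ < 1) (n : ℕ) :
    iteratedDeriv n (fun z => qPI (a * z) q / qPI (b * z) q) 0 / n.factorial =
      qBinomCoeff a b q n := by
  have hseries := hasFPowerSeriesAt_qPI_div_qPI a b hq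
  have huniq := hseries.analyticAt.hasFPowerSeriesAt.eq_formalMultilinearSeries hseries
  simpa only [FormalMultilinearSeries.coeff_ofScalars] using congrArg (·.coeff n) huniq

end QBinomial

lemma tsum_pow_mul_tsum_pow {𝕜 : Type*} [NormedField 𝕜] [CompleteSpace 𝕜] {c : ℕ → 𝕜} {t q : 𝕜}
    (ht : ‖t‖ < 1) (hq : ‖q‖ ≤ 1) (hc : Summable fun n => ‖c n * q ^ n‖) :
    ∑' m : ℕ, t ^ (m + 1) * ∑' n, c n * (q ^ (m + 1)) ^ n =
      ∑' n, c n * (t * q ^ n / (1 - t * q ^ n)) := by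
  have hdouble : Summable (Function.uncurry fun m n : ℕ =>
      t ^ (m + 1) * (c n * (q ^ (m + 1)) ^ n)) := by
    have ht' : Summable fun m : ℕ => ‖t‖ ^ (m + 1) :=
      (summable_nat_add_iff 1).2 (summable_geometric_of_lt_one (norm_nonneg t) ht)
    refine .of_norm_bounded
      (ht'.mul_of_nonneg hc (fun _ => by positivity) fun _ => norm_nonneg _) ?_
    rintro ⟨m, n⟩
    simp only [Function.uncurry, norm_mul, norm_pow]
    gcongr
    exact pow_le_of_le_one (norm_nonneg q) hq m.succ_ne_zero
  have hgeom (n : ℕ) : ∑' m : ℕ, t ^ (m + 1) * (c n * (q ^ (m + 1)) ^ n) =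
      c n * (t * q ^ n / (1 - t * q ^ n)) := by
    have hlt := norm_mul_pow_lt_one ht hq n
    calc ∑' m : ℕ, t ^ (m + 1) * (c n * (q ^ (m + 1)) ^ n)
        = ∑' m : ℕ, c n * (t * q ^ n) * (t * q ^ n) ^ m := by
          refine tsum_congr fun m => ?_
          ring
      _ = c n * (t * q ^ n / (1 - t * q ^ n)) := by
          rw [tsum_mul_left, tsum_geometric_of_norm_lt_one hlt]
          ring
  simp only [← tsum_mul_left]
  rw [← hdouble.tsum_comm]
  exact tsum_congr hgeom

section SlitDisc

lemma norm_pow_sub_pow_le {𝕜 : Type*} [NormedField 𝕜] {x y : 𝕜} (hx : 3 * ‖x‖ ^ 2 ≤ 1)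
    (hy : 3 * ‖y‖ ^ 2 ≤ 1) (n : ℕ) : ‖x ^ (n + 3) - y ^ (n + 3)‖ ≤ ‖x - y‖ := by
  have hx₀ := norm_nonneg x
  have hy₀ := norm_nonneg y
  induction n with
  | zero =>
    calc ‖x ^ 3 - y ^ 3‖ = ‖x ^ 2 + x * y + y ^ 2‖ * ‖x - y‖ := by
          rw [← norm_mul]
          ring_nf
      _ ≤ 1 * ‖x - y‖ := by
          gcongr
          refine norm_add₃_le.trans ?_
          simp only [norm_mul, norm_pow]
          nlinarith [sq_nonneg (‖x‖ - ‖y‖)]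
      _ = ‖x - y‖ := one_mul _
  | succ n ih =>
    have hx' : ‖x‖ ≤ 3 / 5 := by nlinarith
    have hy' : ‖y‖ ≤ 3 / 5 := by nlinarith
    have hpow : ‖y‖ ^ (n + 3) ≤ 2 / 5 := by
      calc ‖y‖ ^ (n + 3) ≤ ‖y‖ ^ 2 := pow_le_pow_of_le_one hy₀ (by linarith) (by lia)
        _ ≤ 2 / 5 := by linarith
    calc ‖x ^ (n + 1 + 3) - y ^ (n + 1 + 3)‖
        = ‖x * (x ^ (n + 3) - y ^ (n + 3)) + y ^ (n + 3) * (x - y)‖ := by ring_nf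
      _ ≤ ‖x‖ * ‖x ^ (n + 3) - y ^ (n + 3)‖ + ‖y‖ ^ (n + 3) * ‖x - y‖ := by
          simpa only [norm_mul, norm_pow] using
            norm_add_le (x * (x ^ (n + 3) - y ^ (n + 3))) (y ^ (n + 3) * (x - y))
      _ ≤ 3 / 5 * ‖x - y‖ + 2 / 5 * ‖x - y‖ := by gcongr
      _ = ‖x - y‖ := by ring

lemma norm_pow_sub_re_pow_le {q : ℂ} (hq : 3 * ‖q‖ ^ 2 ≤ 1) (n : ℕ) :
    ‖q ^ (n + 3) - (q.re ^ (n + 3) : ℝ)‖ ≤ |q.im| := by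
  have hre : 3 * ‖(q.re : ℂ)‖ ^ 2 ≤ 1 := by
    rw [norm_real]
    exact le_trans (by gcongr; exact abs_re_le_norm q) hq
  have hsub : q - q.re = q.im * I := by linear_combination -re_add_im q
  simpa only [ofReal_pow, hsub, norm_mul, norm_real, norm_I, mul_one, Real.norm_eq_abs] using
    norm_pow_sub_pow_le hq hre n

/-- A continuous lower bound for every `|1 - 2q + q^(n+3)|` on the disc `3 |q|² ≤ 1`, positive
exactly off the ray `[1/2, ∞)`. It makes the sum over `ν` converge locally uniformly. -/
def slitGap (q : ℂ) : ℝ := max |q.im| ((1 - 2 * q.re) / 4)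

lemma continuous_slitGap : Continuous slitGap := by
  unfold slitGap
  fun_prop

lemma slitGap_pos_iff {q : ℂ} : 0 < slitGap q ↔ ¬∃ x : ℝ, 1 / 2 ≤ x ∧ q = x := by
  rw [← not_le, not_iff_not, slitGap, max_le_iff, abs_nonpos_iff]
  constructor
  · rintro ⟨him, hre⟩
    exact ⟨q.re, by linarith, Complex.ext rfl him⟩
  · rintro ⟨x, hx, rfl⟩
    exact ⟨ofReal_im x, by rw [ofReal_re]; linarith⟩

lemma min_le_pow_succ {x : ℝ} (hx : |x| ≤ 1) (n : ℕ) : min x 0 ≤ x ^ (n + 1) := by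
  rcases le_total 0 x with hx₀ | hx₀
  · exact (min_le_right x 0).trans (pow_nonneg hx₀ _)
  · have hpow : |x ^ (n + 1)| ≤ |x| := by
      rw [abs_pow]
      exact pow_le_of_le_one (abs_nonneg x) hx n.succ_ne_zero
    rw [abs_of_nonpos hx₀] at hpow
    exact (min_le_left x 0).trans (by linarith [neg_le_of_abs_le hpow])

lemma slitGap_le_norm {q : ℂ} (hq : 3 * ‖q‖ ^ 2 ≤ 1) (n : ℕ) :
    slitGap q ≤ ‖1 - 2 * q + q ^ (n + 3)‖ := by
  -- `q^(n+3)` lies within `|q.im|` of the real axis, too close to cancel the imaginary part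
  -- `-2 q.im` of `1 - 2q`.
  set δ : ℂ := q ^ (n + 3) - (q.re ^ (n + 3) : ℝ) with hδ
  set F : ℂ := 1 - 2 * q + q ^ (n + 3) with hF
  have hδ_le : ‖δ‖ ≤ |q.im| := norm_pow_sub_re_pow_le hq n
  have hF_im : F.im = -2 * q.im + δ.im := by
    simp only [hF, hδ, add_im, sub_im, mul_im, one_im, re_ofNat, im_ofNat, ofReal_im]
    ring
  have hF_re : F.re = 1 - 2 * q.re + q.re ^ (n + 3) + δ.re := by
    simp only [hF, hδ, add_re, sub_re, mul_re, one_re, re_ofNat, im_ofNat, ofReal_re]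
    ring
  have him_le : |q.im| ≤ ‖F‖ := by
    have hF_le := abs_im_le_norm F
    have hδ_im := (abs_im_le_norm δ).trans hδ_le
    grind
  have hre_le : 1 - 2 * q.re + q.re ^ (n + 3) ≤ 2 * ‖F‖ := by
    linarith [re_le_norm F, neg_le_of_abs_le ((abs_re_le_norm δ).trans hδ_le)]
  have hq₁ : ‖q‖ ≤ 1 := by nlinarith [norm_nonneg q]
  have hpow := min_le_pow_succ ((abs_re_le_norm q).trans hq₁) (n + 2)
  refine max_le him_le ?_
  rcases min_le_iff.1 hpow with h | h <;> linarith [norm_nonneg F]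

lemma slitDisc_eq : slitDisc = {q | ‖q‖ < 55 / 100} ∩ {q | 0 < slitGap q} := by
  ext q
  refine and_congr_right fun hq => Iff.trans (not_congr ⟨?_, ?_⟩) slitGap_pos_iff.symm
  · rintro ⟨x, hx, -, rfl⟩
    exact ⟨x, hx, rfl⟩
  · rintro ⟨x, hx, rfl⟩
    exact ⟨x, hx, (le_abs_self x).trans (by simpa using hq.le), rfl⟩

lemma slitGap_pos {q : ℂ} (hq : q ∈ slitDisc) : 0 < slitGap q :=
  (slitDisc_eq ▸ hq).2

lemma isOpen_slitDisc : IsOpen slitDisc := by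
  rw [slitDisc_eq]
  exact (isOpen_lt continuous_norm continuous_const).inter
    (isOpen_lt continuous_const continuous_slitGap)

lemma one_sub_two_mul_ne_zero {q : ℂ} (hq : q ∈ slitDisc) : 1 - 2 * q ≠ 0 := by
  intro h
  refine hq.2 ⟨1 / 2, le_rfl, by norm_num, ?_⟩
  push_cast
  linear_combination (-1 / 2 : ℂ) * h

lemma norm_lt_one_of_mem_slitDisc {q : ℂ} (hq : q ∈ slitDisc) : ‖q‖ < 1 :=
  hq.1.trans (by norm_num)

lemma one_sub_ne_zero_of_mem_slitDisc {q : ℂ} (hq : q ∈ slitDisc) : 1 - q ≠ 0 :=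
  (isUnit_one_sub_of_norm_lt_one (norm_lt_one_of_mem_slitDisc hq)).ne_zero

end SlitDisc

section Parameters

variable {q : ℂ}

lemma norm_mul_uF_le (hq : ‖q‖ ≤ 55 / 100) : ‖q * uF q‖ ≤ 121 / 180 := by
  have hden : 45 / 100 ≤ ‖1 - q‖ := by
    have := norm_sub_norm_le 1 q
    rw [norm_one] at this
    linarith
  calc ‖q * uF q‖ = ‖q‖ ^ 2 / ‖1 - q‖ := by
        rw [uF, norm_mul, norm_div]
        ring
    _ ≤ (55 / 100) ^ 2 / (45 / 100) := by gcongr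
    _ = 121 / 180 := by norm_num

lemma vF_eq_one_add (hq : 1 - q ≠ 0) : vF q = 1 + q * uF q := by
  rw [vF, uF]
  field_simp

lemma norm_vF_le (hq : ‖q‖ ≤ 55 / 100) : ‖vF q‖ ≤ 301 / 180 := by
  rw [vF_eq_one_add (isUnit_one_sub_of_norm_lt_one (hq.trans_lt (by norm_num))).ne_zero]
  calc ‖1 + q * uF q‖ ≤ ‖(1 : ℂ)‖ + ‖q * uF q‖ := norm_add_le _ _
    _ ≤ 1 + 121 / 180 := by
      rw [norm_one]
      gcongr
      exact norm_mul_uF_le hq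
    _ = 301 / 180 := by norm_num

lemma norm_vF_mul_self_lt_one (hq : ‖q‖ ≤ 55 / 100) : ‖vF q * q‖ < 1 := by
  calc ‖vF q * q‖ = ‖vF q‖ * ‖q‖ := norm_mul _ _
    _ ≤ 301 / 180 * (55 / 100) := by
      gcongr
      exact norm_vF_le hq
    _ < 1 := by norm_num

lemma norm_mul_uF_lt_one (hq : ‖q‖ ≤ 55 / 100) : ‖q * uF q‖ < 1 :=
  (norm_mul_uF_le hq).trans_lt (by norm_num)

lemma analyticAt_uF (hq : 1 - q ≠ 0) : AnalyticAt ℂ uF q :=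
  AnalyticAt.fun_div (by fun_prop) (by fun_prop) hq

lemma analyticAt_vF (hq : 1 - q ≠ 0) : AnalyticAt ℂ vF q :=
  AnalyticAt.fun_div (by fun_prop) (by fun_prop) hq

lemma dCoef_eq_qBinomCoeff (hq : ‖q‖ < 1) (n : ℕ) :
    dCoef q n = qBinomCoeff (q * uF q) (vF q) q n :=
  iteratedDeriv_qPI_div_qPI (q * uF q) (vF q) hq n

lemma dCoef_zero (hq : ‖q‖ < 1) : dCoef q 0 = 1 := by
  rw [dCoef_eq_qBinomCoeff hq, qBinomCoeff_zero]

lemma tsum_dCoef_mul_pow {z : ℂ} (hq : ‖q‖ < 1) (hz : ‖vF q * z‖ < 1) :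
    ∑' n, dCoef q n * z ^ n = dFun q z := by
  simp only [dCoef_eq_qBinomCoeff hq]
  exact (hasSum_qBinomCoeff_mul_pow (q * uF q) hq hz).tsum_eq

lemma analyticAt_dCoef (hq : ‖q‖ < 1) (n : ℕ) : AnalyticAt ℂ (fun p => dCoef p n) q := by
  have hq₁ := (isUnit_one_sub_of_norm_lt_one hq).ne_zero
  have hbinom : AnalyticAt ℂ (fun p => qBinomCoeff (p * uF p) (vF p) p n) q :=
    analyticAt_qBinomCoeff (analyticAt_id.fun_mul (analyticAt_uF hq₁)) (analyticAt_vF hq₁) hq n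
  refine hbinom.congr ?_
  filter_upwards [continuous_norm.continuousAt.eventually_lt_const hq] with p hp
  exact (dCoef_eq_qBinomCoeff hp n).symm

/-- A summable bound for `|d_n(q) qⁿ|`, uniform on the disc `|q| ≤ 55/100`, where `|q u(q)|` and
`|v(q)|` are at most `121/180` and `301/180`. -/
def dMajorant (n : ℕ) : ℝ := qBinomCoeff (-(121 / 180)) (301 / 180) (55 / 100) n * (55 / 100) ^ n

lemma norm_dCoef_mul_pow_le (hq : ‖q‖ ≤ 55 / 100) (n : ℕ) :
    ‖dCoef q n * q ^ n‖ ≤ dMajorant n := by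
  have hcoeff := norm_qBinomCoeff_le (norm_mul_uF_le hq) (norm_vF_le hq) hq (by norm_num) n
  rw [dCoef_eq_qBinomCoeff (hq.trans_lt (by norm_num)), norm_mul, norm_pow]
  exact mul_le_mul hcoeff (by gcongr) (by positivity) ((norm_nonneg _).trans hcoeff)

lemma summable_dMajorant : Summable dMajorant :=
  (summable_norm_qBinomCoeff_mul_pow (b := 301 / 180) (q := 55 / 100) (z := 55 / 100)
    (-(121 / 180) : ℝ) (by norm_num [abs_of_pos]) (by norm_num [abs_of_pos])).of_norm

end Parameters

section Extension

variable {q : ℂ}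

/-- The `ν`-th term, from `ν = 0`, of the sum over the Taylor coefficients `d_(ν+1)(q)` in the
representation of `PA(q)`. -/
def lambertTerm (q : ℂ) (ν : ℕ) : ℂ :=
  dCoef q (ν + 1) * q ^ (ν + 3) / (1 - 2 * q + q ^ (ν + 3))

/-- The analytic continuation of `PA(q)` to the slit disc, defined by its representation. -/
def PAext (q : ℂ) : ℂ :=
  CF q - AF q * (qPI (vF q) q / qPI (q * uF q) q) *
    (q ^ 2 / (1 - q) ^ 2 + ∑' ν, lambertTerm q ν)

lemma norm_lambertTerm_le (hq : ‖q‖ ≤ 55 / 100) {c : ℝ} (hc : 0 < c) (hcq : c ≤ slitGap q)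
    (ν : ℕ) : ‖lambertTerm q ν‖ ≤ dMajorant (ν + 1) / c := by
  have hcoeff := norm_dCoef_mul_pow_le hq (ν + 1)
  have hnum : ‖dCoef q (ν + 1) * q ^ (ν + 3)‖ ≤ dMajorant (ν + 1) := by
    calc ‖dCoef q (ν + 1) * q ^ (ν + 3)‖
        = ‖dCoef q (ν + 1) * q ^ (ν + 1)‖ * ‖q‖ ^ 2 := by
          rw [← norm_pow, ← norm_mul]
          ring_nf
      _ ≤ ‖dCoef q (ν + 1) * q ^ (ν + 1)‖ :=
          mul_le_of_le_one_right (norm_nonneg _)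
            (pow_le_one₀ (norm_nonneg q) (hq.trans (by norm_num)))
      _ ≤ dMajorant (ν + 1) := hcoeff
  have hden : c ≤ ‖1 - 2 * q + q ^ (ν + 3)‖ :=
    hcq.trans (slitGap_le_norm (by nlinarith [norm_nonneg q]) ν)
  rw [lambertTerm, norm_div]
  exact div_le_div₀ ((norm_nonneg _).trans hnum) hnum hc hden

lemma summable_dMajorant_succ_div (c : ℝ) : Summable fun ν => dMajorant (ν + 1) / c :=
  ((summable_nat_add_iff 1).2 summable_dMajorant).div_const c

lemma summable_norm_lambertTerm (hq : q ∈ slitDisc) : Summable fun ν => ‖lambertTerm q ν‖ :=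
  (summable_dMajorant_succ_div (slitGap q)).of_nonneg_of_le (fun _ => norm_nonneg _)
    (norm_lambertTerm_le hq.1.le (slitGap_pos hq) le_rfl)

lemma analyticAt_lambertTerm (hq : q ∈ slitDisc) (ν : ℕ) :
    AnalyticAt ℂ (fun p => lambertTerm p ν) q := by
  have hden : 1 - 2 * q + q ^ (ν + 3) ≠ 0 :=
    norm_pos_iff.1 ((slitGap_pos hq).trans_le
      (slitGap_le_norm (by nlinarith [norm_nonneg q, hq.1]) ν))
  exact ((analyticAt_dCoef (norm_lt_one_of_mem_slitDisc hq) _).fun_mul (by fun_prop)).fun_div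
    (by fun_prop) hden

lemma analyticAt_tsum_lambertTerm (hq : q ∈ slitDisc) :
    AnalyticAt ℂ (fun p => ∑' ν, lambertTerm p ν) q := by
  have hc : 0 < slitGap q / 2 := half_pos (slitGap_pos hq)
  set U : Set ℂ := slitDisc ∩ {p | slitGap q / 2 < slitGap p}
  have hU : IsOpen U :=
    isOpen_slitDisc.inter (isOpen_lt continuous_const continuous_slitGap)
  have hqU : q ∈ U := ⟨hq, half_lt_self (slitGap_pos hq)⟩
  have hdiff : DifferentiableOn ℂ (fun p => ∑' ν, lambertTerm p ν) U :=
    differentiableOn_tsum_of_summable_norm (summable_dMajorant_succ_div (slitGap q / 2))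
      (fun ν p hp => (analyticAt_lambertTerm hp.1 ν).differentiableAt.differentiableWithinAt) hU
      (fun ν p hp => norm_lambertTerm_le hp.1.1.le hc hp.2.le ν)
  exact hdiff.analyticAt (hU.mem_nhds hqU)

lemma analyticOnNhd_PAext : AnalyticOnNhd ℂ PAext slitDisc := by
  intro q hq
  have hq_lt := norm_lt_one_of_mem_slitDisc hq
  have hq₁ := one_sub_ne_zero_of_mem_slitDisc hq
  have hq₂ := one_sub_two_mul_ne_zero hq
  have hC : AnalyticAt ℂ CF q :=
    AnalyticAt.fun_div (by fun_prop) (by fun_prop) (mul_ne_zero hq₁ (pow_ne_zero 2 hq₂))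
  have hA : AnalyticAt ℂ AF q :=
    AnalyticAt.fun_div (by fun_prop) (by fun_prop) (pow_ne_zero 2 hq₂)
  have hv : AnalyticAt ℂ (fun p => qPI (vF p) p) q := analyticAt_qPI (analyticAt_vF hq₁) hq_lt
  have hu : AnalyticAt ℂ (fun p => qPI (p * uF p) p) q :=
    analyticAt_qPI (analyticAt_id.fun_mul (analyticAt_uF hq₁)) hq_lt
  have hquot : AnalyticAt ℂ (fun p : ℂ => p ^ 2 / (1 - p) ^ 2) q :=
    AnalyticAt.fun_div (by fun_prop) (by fun_prop) (pow_ne_zero 2 hq₁)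
  have hprefactor : AnalyticAt ℂ (fun p => qPI (vF p) p / qPI (p * uF p) p) q :=
    hv.fun_div hu (qPI_ne_zero hq_lt (norm_mul_uF_lt_one hq.1.le))
  exact hC.fun_sub ((hA.fun_mul hprefactor).fun_mul
    (hquot.fun_add (analyticAt_tsum_lambertTerm hq)))

end Extension

section Series

variable {q : ℂ}

/-- The ratio `t = -q² / (1 - 2q)` whose powers appear in the series for `PA(q)`. -/
def tF (q : ℂ) : ℂ := -q ^ 2 / (1 - 2 * q)

lemma PAterm_succ_eq (hq : 1 - q ≠ 0) (m : ℕ) :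
    PAterm q (m + 1) = (1 - q)⁻¹ *
      (tF q ^ (m + 1) * (qPF (vF q * q) q m / qPF (q * uF q) q (m + 1))) := by
  have hfactor (k : ℕ) :
      (1 - q - q ^ (k + 1) + q ^ (k + 1 + 1) - q ^ (k + 1 + 2)) / (1 - q - q ^ (k + 1 + 1)) =
        (1 - vF q * q * q ^ k) / (1 - q * uF q * q ^ k) := by
    rw [← mul_div_mul_left _ (1 - q * uF q * q ^ k) hq, vF, uF]
    congr 1 <;> field_simp <;> ring
  have hlast : 1 - q - q ^ (m + 1 + 1) = (1 - q) * (1 - q * uF q * q ^ m) := by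
    rw [uF]
    field_simp
    ring
  have hpow : tF q ^ (m + 1) = (-1) ^ (m + 1) * q ^ (2 * (m + 1)) / (1 - 2 * q) ^ (m + 1) := by
    rw [tF, div_pow, neg_pow, pow_mul]
  have hprod : ∏ k ∈ Finset.Icc 1 m,
      (1 - q - q ^ k + q ^ (k + 1) - q ^ (k + 2)) / (1 - q - q ^ (k + 1)) =
        qPF (vF q * q) q m / qPF (q * uF q) q m := by
    rw [← Finset.Ico_add_one_right_eq_Icc, Finset.prod_Ico_eq_prod_range]
    simp only [Nat.add_sub_cancel, add_comm 1, hfactor, Finset.prod_div_distrib, qPF]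
  rw [PAterm, Nat.add_sub_cancel, hprod, hlast, hpow, qPF_succ]
  simp only [div_eq_mul_inv, mul_inv]
  ring

lemma qPF_div_qPF_eq_dFun (hq : ‖q‖ ≤ 55 / 100) (m : ℕ) :
    qPF (vF q * q) q m / qPF (q * uF q) q (m + 1) =
      qPI (vF q * q) q / qPI (q * uF q) q * dFun q (q ^ (m + 1)) := by
  have hq₁ : ‖q‖ < 1 := hq.trans_lt (by norm_num)
  rw [qPF_eq_qPI_div_qPI hq₁ (qPI_ne_zero hq₁ (norm_mul_pow_lt_one
      (norm_vF_mul_self_lt_one hq) hq₁.le m)),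
    qPF_eq_qPI_div_qPI hq₁ (qPI_ne_zero hq₁ (norm_mul_pow_lt_one
      (norm_mul_uF_lt_one hq) hq₁.le (m + 1))), dFun, pow_succ' q m, ← mul_assoc (vF q)]
  simp only [div_eq_mul_inv, mul_inv, inv_inv]
  ring

lemma dCoef_mul_geometric_eq (hq : 1 - 2 * q ≠ 0) (n : ℕ) :
    dCoef q n * (tF q * q ^ n / (1 - tF q * q ^ n)) =
      -(dCoef q n * q ^ (n + 2) / (1 - 2 * q + q ^ (n + 2))) := by
  have hnum : tF q * q ^ n = -q ^ (n + 2) / (1 - 2 * q) := by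
    rw [tF]
    ring
  have hden : 1 - tF q * q ^ n = (1 - 2 * q + q ^ (n + 2)) / (1 - 2 * q) := by
    rw [hnum, one_sub_div hq]
    ring
  rw [hden, hnum, div_div_div_cancel_right₀ hq]
  ring

lemma tsum_tF_pow_mul_dFun (hq : q ∈ slitDisc) (ht : ‖tF q‖ < 1) :
    ∑' m : ℕ, tF q ^ (m + 1) * dFun q (q ^ (m + 1)) =
      -(q ^ 2 / (1 - q) ^ 2 + ∑' ν, lambertTerm q ν) := by
  have hq₁ := norm_lt_one_of_mem_slitDisc hq
  have hq₂ := one_sub_two_mul_ne_zero hq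
  have hvq := norm_vF_mul_self_lt_one hq.1.le
  have hexpand (m : ℕ) : dFun q (q ^ (m + 1)) = ∑' n, dCoef q n * (q ^ (m + 1)) ^ n := by
    refine (tsum_dCoef_mul_pow hq₁ ?_).symm
    simpa only [pow_succ', mul_assoc] using norm_mul_pow_lt_one hvq hq₁.le m
  have hsummable : Summable fun n => ‖dCoef q n * q ^ n‖ :=
    summable_dMajorant.of_nonneg_of_le (fun _ => norm_nonneg _) (norm_dCoef_mul_pow_le hq.1.le)
  have hsummable' : Summable fun n => dCoef q n * q ^ (n + 2) / (1 - 2 * q + q ^ (n + 2)) :=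
    (summable_nat_add_iff 1).1 (summable_norm_lambertTerm hq).of_norm
  simp only [hexpand]
  rw [tsum_pow_mul_tsum_pow ht hq₁.le hsummable]
  simp only [dCoef_mul_geometric_eq hq₂]
  rw [tsum_neg, hsummable'.tsum_eq_zero_add, dCoef_zero hq₁]
  congr 2
  ring

lemma qPI_vF_eq (hq : ‖q‖ < 1) : qPI (vF q) q = -q ^ 2 / (1 - q) * qPI (vF q * q) q := by
  have hq₁ := (isUnit_one_sub_of_norm_lt_one hq).ne_zero
  have hfirst : qPF (vF q) q 1 = -q ^ 2 / (1 - q) := by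
    rw [qPF, Finset.prod_range_one, pow_zero, mul_one, vF]
    field_simp
    ring
  rw [← hfirst, ← qPF_mul_qPI (vF q) hq 1, pow_one]

lemma PAext_eq_PAseries (hq : q ∈ slitDisc) (ht : ‖tF q‖ < 1) : PAext q = PAseries q := by
  have hq₁ := one_sub_ne_zero_of_mem_slitDisc hq
  have hterm (m : ℕ) : PAterm q (m + 1) =
      (1 - q)⁻¹ * (qPI (vF q * q) q / qPI (q * uF q) q) *
        (tF q ^ (m + 1) * dFun q (q ^ (m + 1))) := by
    rw [PAterm_succ_eq hq₁, qPF_div_qPF_eq_dFun hq.1.le]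
    ring
  simp only [PAseries, hterm]
  rw [tsum_mul_left, tsum_tF_pow_mul_dFun hq ht, PAext,
    qPI_vF_eq (norm_lt_one_of_mem_slitDisc hq), CF, AF]
  ring

lemma mem_slitDisc_of_norm_lt (hq : ‖q‖ < 1 / 2) : q ∈ slitDisc := by
  refine ⟨hq.trans (by norm_num), ?_⟩
  rintro ⟨x, hx, -, rfl⟩
  rw [norm_real, Real.norm_eq_abs] at hq
  linarith [le_abs_self x]

lemma norm_tF_lt_one (hq : ‖q‖ < 2 / 5) : ‖tF q‖ < 1 := by
  have hden : 1 - 2 * ‖q‖ ≤ ‖1 - 2 * q‖ := by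
    simpa using norm_sub_norm_le 1 (2 * q)
  rw [tF, norm_div, norm_neg, norm_pow, div_lt_one (by linarith)]
  nlinarith [norm_nonneg q]

end Series

/-- `PA(q)` extends analytically to the slit disc `D₀`, where it admits the convergent
representation in terms of the coefficients `d_ν(q)`. -/
theorem PA_extends_to_slit_disc :
    ∃ f : ℂ → ℂ,
      AnalyticOnNhd ℂ f slitDisc ∧
      (∀ q : ℂ, ‖q‖ < 1 / 10 → f q = PAseries q) ∧
      ∀ q ∈ slitDisc,
        Summable (fun ν : ℕ =>
          ‖dCoef q (ν + 1) * q ^ (ν + 3) / (1 - 2 * q + q ^ (ν + 3))‖) ∧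
        f q = CF q - AF q * (qPI (vF q) q / qPI (q * uF q) q) *
          (q ^ 2 / (1 - q) ^ 2 +
            ∑' ν : ℕ, dCoef q (ν + 1) * q ^ (ν + 3) / (1 - 2 * q + q ^ (ν + 3))) := by
  refine ⟨PAext, analyticOnNhd_PAext, fun q hq => ?_,
    fun q hq => ⟨summable_norm_lambertTerm hq, rfl⟩⟩
  exact PAext_eq_PAseries (mem_slitDisc_of_norm_lt (by linarith)) (norm_tF_lt_one (by linarith))
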